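/- Assume further that there is W₀ ∈ ℝ with ∫_0^∞ Θ(u) du = Φ/q − W₀ and ∫_0^∞ e^{−φu} Θ(u) du = (φ−Φ)/(δφ) − W₀. If h(y) = a y + η for reals a, η, then I(b) = (δΦ/φ)( a/q − β ) for every b ∈ ℝ; in particular I is identically zero if and only if a = qβ. -/

import Mathlib

open MeasureTheory Set Filter


lemma aux_inner (φ : ℝ) (hφ : 0 < φ) (u : ℝ) (hu : 0 < u) :
    ∫ z, (if z < u then (Set.Ioi (0:ℝ)).indicator (fun z => Real.exp (-φ * z)) z else 0)
      = (1 - Real.exp (-φ * u)) / φ := by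
  have h1 : (fun z => (if z < u then (Set.Ioi (0:ℝ)).indicator (fun z => Real.exp (-φ * z)) z else 0))
      = (Set.Ioo (0:ℝ) u).indicator (fun z => Real.exp (-φ * z)) := by
    funext z
    simp only [Set.indicator_apply, Set.mem_Ioi, Set.mem_Ioo]
    by_cases h1 : z < u <;> by_cases h2 : 0 < z <;> simp [h1, h2]
  rw [h1, integral_indicator measurableSet_Ioo, ← integral_Ioc_eq_integral_Ioo,
    ← intervalIntegral.integral_of_le hu.le]
  have h2 : ∀ x ∈ Set.uIcc 0 u, HasDerivAt (fun z => -Real.exp (-φ * z) / φ) (Real.exp (-φ * x)) x := by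
    intro x _
    have h3 : HasDerivAt (fun z : ℝ => -φ * z) (-φ) x := by
      simpa using (hasDerivAt_id x).const_mul (-φ)
    have := (h3.exp.neg).div_const φ
    refine this.congr_deriv ?_
    field_simp
  rw [intervalIntegral.integral_eq_sub_of_hasDerivAt h2
    (Continuous.intervalIntegrable (by fun_prop) _ _)]
  simp
  ring

lemma aux_G (φ : ℝ) (hφ : 0 < φ) (Θ : ℝ → ℝ)
    (hΘint : IntegrableOn Θ (Set.Ioi 0)) (G : ℝ → ℝ)
    (hG : ∀ y ∈ Set.Iio (0 : ℝ),
      G y = ∫ z in Set.Ioi (0 : ℝ), Real.exp (-φ * z) * Θ (z - y)) :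
    ∫ y in Set.Iio (0:ℝ), G y =
      ((∫ u in Set.Ioi (0 : ℝ), Θ u) - ∫ u in Set.Ioi (0 : ℝ), Real.exp (-φ * u) * Θ u) / φ := by
  set E : ℝ → ℝ := (Set.Ioi (0:ℝ)).indicator (fun z => Real.exp (-φ * z)) with hE
  set T : ℝ → ℝ := (Set.Ioi (0:ℝ)).indicator Θ with hT
  have hexp : IntegrableOn (fun z => Real.exp (-φ * z)) (Set.Ioi 0) :=
    exp_neg_integrableOn_Ioi 0 hφ
  have hEi : Integrable E := hexp.integrable_indicator measurableSet_Ioi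
  have hTi : Integrable T := hΘint.integrable_indicator measurableSet_Ioi
  have hGe : ∀ y ∈ Set.Iio (0:ℝ), G y = ∫ z, E z * T (z - y) := by
    intro y hy
    rw [hG y hy, ← integral_indicator measurableSet_Ioi]
    congr 1
    funext z
    simp only [hE, hT, Set.indicator_apply, Set.mem_Ioi]
    simp only [Set.mem_Iio] at hy
    by_cases hz : 0 < z
    · have : 0 < z - y := by linarith
      simp only [hz, this, if_true]
    · simp [hz]
  rw [setIntegral_congr_fun measurableSet_Iio hGe]
  have hc : Integrable (fun p : ℝ × ℝ => E p.2 * T (p.2 - p.1)) (volume.prod volume) := by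
    have := hEi.convolution_integrand (ContinuousLinearMap.mul ℝ ℝ) hTi.comp_neg
    simpa using this
  have hc' : Integrable (fun p : ℝ × ℝ => E p.2 * T (p.2 - p.1))
      ((volume.restrict (Set.Iio 0)).prod volume) := by
    have := hc.integrableOn (s := Set.Iio (0:ℝ) ×ˢ Set.univ)
    rwa [IntegrableOn, ← Measure.prod_restrict, Measure.restrict_univ] at this
  rw [integral_integral_swap (f := fun y z => E z * T (z - y)) hc']
  have hin : ∀ z, ∫ y in Set.Iio (0:ℝ), E z * T (z - y) = ∫ u, (if z < u then E z * T u else 0) := by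
    intro z
    rw [← integral_indicator measurableSet_Iio,
      ← integral_sub_left_eq_self (fun u => (if z < u then E z * T u else 0)) volume z]
    congr 1
    funext y
    simp only [Set.indicator_apply, Set.mem_Iio]
    have : z < z - y ↔ y < 0 := by constructor <;> intro h <;> linarith
    simp only [this]
  simp_rw [hin]
  have hp : Integrable (fun p : ℝ × ℝ => if p.1 < p.2 then E p.1 * T p.2 else 0)
      (volume.prod volume) := by
    have hm : MeasurableSet {p : ℝ × ℝ | p.1 < p.2} := measurableSet_lt measurable_fst measurable_snd
    have := (hEi.mul_prod hTi).indicator hm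
    refine this.congr (Eventually.of_forall fun p => ?_)
    simp [Set.indicator_apply]
  rw [integral_integral_swap (f := fun z u => if z < u then E z * T u else 0) hp]
  have hfin : ∀ u, ∫ z, (if z < u then E z * T u else 0)
      = (Set.Ioi (0:ℝ)).indicator (fun u => (Θ u - Real.exp (-φ * u) * Θ u) / φ) u := by
    intro u
    by_cases hu : 0 < u
    · have h0 : ∀ z, (if z < u then E z * T u else 0) = (if z < u then E z else 0) * T u := by
        intro z; split_ifs <;> simp
      simp_rw [h0]
      rw [integral_mul_const, aux_inner φ hφ u hu]
      simp [hT, hu]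
      ring
    · simp [hT, hu]
  simp_rw [hfin]
  rw [integral_indicator measurableSet_Ioi, integral_div, integral_sub hΘint]
  refine Integrable.bdd_mul (c := 1) hΘint (by fun_prop) ?_
  filter_upwards [ae_restrict_mem measurableSet_Ioi] with u hu
  rw [Real.norm_eq_abs, abs_of_pos (Real.exp_pos _), Real.exp_le_one_iff]
  have : 0 < φ * u := mul_pos hφ hu
  linarith

/-- Example 3.3: for the affine cost `h(y) = a y + η`,
`I(b) = (δΦ/φ)(a/q - β)` for every `b`; in particular `I ≡ 0` iff `a = qβ`. -/
theorem stmt8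
    (q δ β Φ φ : ℝ)
    (hq : 0 < q) (hδ : 0 < δ) (hΦ : 0 < Φ) (hΦφ : Φ < φ)
    (Θ : ℝ → ℝ) (hΘmeas : Measurable Θ) (hΘnn : ∀ u ∈ Set.Ioi (0 : ℝ), 0 ≤ Θ u)
    (h : ℝ → ℝ) (hconv : ConvexOn ℝ Set.univ h) (hdiff : Differentiable ℝ h)
    (G : ℝ → ℝ)
    (hG : ∀ y ∈ Set.Iio (0 : ℝ),
      G y = ∫ z in Set.Ioi (0 : ℝ), Real.exp (-φ * z) * Θ (z - y))
    (hint1 : ∀ b : ℝ,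
      IntegrableOn (fun y => deriv h (y + b) * Real.exp (-φ * y)) (Set.Ioi 0))
    (hint2 : ∀ b : ℝ,
      IntegrableOn (fun y => deriv h (y + b) * G y) (Set.Iio 0))
    (I : ℝ → ℝ)
    (hI : ∀ b : ℝ, I b =
      (φ - Φ) / φ * (∫ y in Set.Ioi (0 : ℝ), deriv h (y + b) * Real.exp (-φ * y))
      + δ * ((∫ y in Set.Iio (0 : ℝ), deriv h (y + b) * G y) - β * Φ / φ))
    (W₀ : ℝ)
    (hΘ1 : ∫ u in Set.Ioi (0 : ℝ), Θ u = Φ / q - W₀)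
    (hΘ2 : ∫ u in Set.Ioi (0 : ℝ), Real.exp (-φ * u) * Θ u = (φ - Φ) / (δ * φ) - W₀)
    (hΘint : IntegrableOn Θ (Set.Ioi 0))
    (a η : ℝ)
    (haff : ∀ y : ℝ, h y = a * y + η) :
    (∀ b : ℝ, I b = (δ * Φ / φ) * (a / q - β)) ∧
    ((∀ b : ℝ, I b = 0) ↔ a = q * β) := by
  have hφ : 0 < φ := hΦ.trans hΦφ
  have hd : ∀ y, deriv h y = a := by
    intro y
    have : h = fun y => a * y + η := funext haff
    rw [this]
    have h3 : HasDerivAt (fun z : ℝ => a * z + η) a y := by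
      simpa using ((hasDerivAt_id y).const_mul a).add_const η
    exact h3.deriv
  have he : ∫ y in Set.Ioi (0:ℝ), Real.exp (-φ * y) = 1 / φ := by
    rw [integral_exp_mul_Ioi (by linarith)]
    simp
  have key : ∀ b : ℝ, I b = (δ * Φ / φ) * (a / q - β) := by
    intro b
    rw [hI b]
    simp_rw [hd]
    rw [integral_const_mul, integral_const_mul, he, aux_G φ hφ Θ hΘint G hG, hΘ1, hΘ2]
    field_simp
    ring
  refine ⟨key, ?_⟩
  have hne : δ * Φ / φ ≠ 0 := by positivity
  constructor
  · intro h0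
    have h1 := key 0
    rw [h0 0] at h1
    have h2 : a / q - β = 0 := by
      rcases mul_eq_zero.mp h1.symm with h | h
      · exact absurd h hne
      · exact h
    field_simp at h2
    linarith
  · intro h0 b
    rw [key b, h0]
    field_simp
    simp
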